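/- Let S be a uniquely ergodic continuous map of a compact metric space Y, with unique S-invariant Borel probability measure ν, and assume that (Y,ν,S) has quasi-discrete spectrum. Let u : ℕ → ℂ be multiplicative with |u(n)| ≤ 1 for all n, and assume additionally that (1/N) Σ_{n ≤ N} u(n) → 0 as N → ∞. Then for every continuous f : Y → ℂ (without any assumption on ∫_Y f dν) and every y ∈ Y, one has (1/N) Σ_{n ≤ N} f(Sⁿy) u(n) → 0 as N → ∞. -/

import Mathlib

open MeasureTheory Filter

/-- `c` is an eigenvalue of `T` w.r.t. `μ`: there is a nonzero `f ∈ L²(μ)` with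
`f ∘ T = c · f` a.e. -/
def IsEigenvalue {X : Type*} [MeasurableSpace X] (T : X → X) (μ : Measure X) (c : ℂ) : Prop :=
  ∃ f : X → ℂ, MemLp f 2 μ ∧ ¬ (f =ᵐ[μ] 0) ∧
    (fun x => f (T x)) =ᵐ[μ] (fun x => c * f x)

/-- The quasi-eigenfunction groups `E_k(T)`: `E₀(T)` consists of the constant functions of
modulus 1 whose value is an eigenvalue of `T`, and
`E_k(T) = {f measurable, |f| = 1 a.e., (f ∘ T)/f ∈ E_{k-1}(T)}`. -/
def quasiEigenfunctions {X : Type*} [MeasurableSpace X] (T : X → X) (μ : Measure X) :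
    ℕ → Set (X → ℂ)
  | 0 => {f | ∃ c : ℂ, ‖c‖ = 1 ∧ IsEigenvalue T μ c ∧ f = fun _ => c}
  | (k+1) => {f | Measurable f ∧ (∀ᵐ x ∂μ, ‖f x‖ = 1) ∧
      (fun x => f (T x) / f x) ∈ quasiEigenfunctions T μ k}

/-- `T` is totally ergodic: every nonzero power of `T` is ergodic. -/
def TotallyErgodic {X : Type*} [MeasurableSpace X] (T : X → X) (μ : Measure X) : Prop :=
  ∀ m : ℕ, m ≠ 0 → Ergodic (T^[m]) μ

/-- `(X,μ,T)` has quasi-discrete spectrum: it is totally ergodic and the linear span of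
the quasi-eigenfunctions `⋃_k E_k(T)` is dense in `L²(X,μ)`. -/
def QuasiDiscreteSpectrum {X : Type*} [MeasurableSpace X] (T : X → X) (μ : Measure X) : Prop :=
  TotallyErgodic T μ ∧
  Dense ((Submodule.span ℂ
      {g : Lp ℂ 2 μ | ∃ k : ℕ, ∃ f ∈ quasiEigenfunctions T μ k, ⇑g =ᵐ[μ] f} :
        Submodule ℂ (Lp ℂ 2 μ)) : Set (Lp ℂ 2 μ))

/-- `S` is uniquely ergodic with unique invariant Borel probability measure `ν`. -/
def UniquelyErgodicWith {Y : Type*} [MeasurableSpace Y] (S : Y → Y) (ν : Measure Y) : Prop :=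
  IsProbabilityMeasure ν ∧ ν.map S = ν ∧
  ∀ μ' : Measure Y, IsProbabilityMeasure μ' → μ'.map S = μ' → μ' = ν

/-!
Kátai's criterion bounds the averages of `a n * u n` once the correlations of `a (p * n)` with
`a (q * n)` are small for the distinct primes `p`, `q` of a suitable finite set.
For `a n = h (S^[n] y)` with `h` continuous, these correlations are averages along an orbit of
`S^[p] × S^[q]`, whose invariant measures are joinings of `ν` with itself, as `S^[p]` and `S^[q]`
are again uniquely ergodic. If `h` is close to a quasi-eigenfunction `F` of degree `d` whose last
multiplicative difference is a constant `c` that is not a root of unity, then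
`(x, x') ↦ F x * conj (F x')` is a quasi-eigenfunction for every such joining, with constant
`c ^ p ^ d / c ^ q ^ d`, and therefore has integral zero by van der Corput's difference argument.
By total ergodicity every other quasi-eigenfunction is constant, and constants are where the mean
of `u` enters.
-/

section Averages

theorem tendsto_inv_mul_sum_Icc_zero_iff {a : ℕ → ℂ} :
    Tendsto (fun N : ℕ => (N : ℂ)⁻¹ * ∑ n ∈ Finset.Icc 1 N, a n) atTop (nhds 0) ↔
      ∀ ε : ℝ, 0 < ε → ∀ᶠ N : ℕ in atTop, ‖∑ n ∈ Finset.Icc 1 N, a n‖ ≤ ε * N := by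
  have hzero : ∀ᶠ N : ℕ in atTop, (N : ℂ) = 0 → ∑ n ∈ Finset.Icc 1 N, a n = 0 := by
    filter_upwards [eventually_ne_atTop 0] with N hN hN'
    exact absurd (Nat.cast_eq_zero.1 hN') hN
  simp only [inv_mul_eq_div]
  rw [← Asymptotics.isLittleO_iff_tendsto' hzero, Asymptotics.isLittleO_iff]
  simp only [Complex.norm_natCast]

end Averages

section KataiCriterion

open Finset

/-- The counting function `ω_P` of Turán and Kubilius: the number of elements of `P`
dividing `n`. -/
def divisorCount (P : Finset ℕ) (n : ℕ) : ℕ := #{p ∈ P | p ∣ n}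

theorem sum_card_filter_dvd {ι : Type*} (s : Finset ι) (d : ι → ℕ) (N : ℕ) :
    ∑ n ∈ Icc 1 N, #{i ∈ s | d i ∣ n} = ∑ i ∈ s, N / d i := by
  refine (sum_card_bipartiteAbove_eq_sum_card_bipartiteBelow fun i n => d i ∣ n).symm.trans ?_
  exact sum_congr rfl fun i _ => Nat.Ioc_filter_dvd_card_eq_div N (d i)

theorem divisorCount_sq (P : Finset ℕ) (n : ℕ) :
    divisorCount P n ^ 2 = #{x ∈ P ×ˢ P | x.1.lcm x.2 ∣ n} := by
  simp only [divisorCount, sq, ← card_product, ← filter_product, Nat.lcm_dvd_iff]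

theorem sum_divisorCount_ge (P : Finset ℕ) (N : ℕ) :
    N * ∑ p ∈ P, (p : ℝ)⁻¹ - #P ≤ ∑ n ∈ Icc 1 N, (divisorCount P n : ℝ) := by
  have hcount : ∑ n ∈ Icc 1 N, divisorCount P n = ∑ p ∈ P, N / p := sum_card_filter_dvd P id N
  rw [← Nat.cast_sum, hcount, Nat.cast_sum, mul_sum, card_eq_sum_ones, Nat.cast_sum,
    ← sum_sub_distrib]
  refine sum_le_sum fun p _ => ?_
  rw [← div_eq_mul_inv, Nat.cast_one, ← Nat.floor_div_eq_div (K := ℝ)]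
  exact (Nat.sub_one_lt_floor _).le

theorem sum_divisorCount_sq_le {P : Finset ℕ} (hP : (P : Set ℕ).Pairwise Nat.Coprime) (N : ℕ) :
    ∑ n ∈ Icc 1 N, (divisorCount P n : ℝ) ^ 2 ≤
      N * ∑ p ∈ P, (p : ℝ)⁻¹ + N * (∑ p ∈ P, (p : ℝ)⁻¹) ^ 2 := by
  have hcount : ∑ n ∈ Icc 1 N, divisorCount P n ^ 2 = ∑ x ∈ P ×ˢ P, N / x.1.lcm x.2 := by
    simp only [divisorCount_sq]
    exact sum_card_filter_dvd (P ×ˢ P) (fun x => x.1.lcm x.2) N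
  have hpair : ∀ p ∈ P, ∀ q ∈ P, ((N / p.lcm q : ℕ) : ℝ) ≤
      (if p = q then N * (p : ℝ)⁻¹ else 0) + N * ((p : ℝ)⁻¹ * (q : ℝ)⁻¹) := by
    intro p hp q hq
    refine Nat.cast_div_le.trans ?_
    rcases eq_or_ne p q with rfl | hpq
    · rw [Nat.lcm_self, if_pos rfl, div_eq_mul_inv]
      exact le_add_of_nonneg_right (by positivity)
    · rw [(hP hp hq hpq).lcm_eq_mul, if_neg hpq, zero_add, Nat.cast_mul, div_eq_mul_inv, mul_inv]
  calc ∑ n ∈ Icc 1 N, (divisorCount P n : ℝ) ^ 2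
      = ∑ p ∈ P, ∑ q ∈ P, ((N / p.lcm q : ℕ) : ℝ) := by
        rw [← sum_product', ← Nat.cast_sum, ← hcount]
        push_cast
        rfl
    _ ≤ ∑ p ∈ P, ∑ q ∈ P,
          ((if p = q then N * (p : ℝ)⁻¹ else 0) + N * ((p : ℝ)⁻¹ * (q : ℝ)⁻¹)) :=
        sum_le_sum fun p hp => sum_le_sum fun q hq => hpair p hp q hq
    _ = N * ∑ p ∈ P, (p : ℝ)⁻¹ + N * (∑ p ∈ P, (p : ℝ)⁻¹) ^ 2 := by
        simp only [sum_add_distrib, ← mul_sum, sum_ite_eq, sq, sum_mul_sum]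
        congr 1
        rw [mul_sum]
        exact sum_congr rfl fun p hp => if_pos hp

theorem turan_kubilius {P : Finset ℕ} (hP : (P : Set ℕ).Pairwise Nat.Coprime) (N : ℕ) :
    ∑ n ∈ Icc 1 N, (divisorCount P n - ∑ p ∈ P, (p : ℝ)⁻¹) ^ 2 ≤
      (N + 2 * #P) * ∑ p ∈ P, (p : ℝ)⁻¹ := by
  have hfirst := sum_divisorCount_ge P N
  have hsecond := sum_divisorCount_sq_le hP N
  set L : ℝ := ∑ p ∈ P, (p : ℝ)⁻¹
  have hL0 : 0 ≤ L := sum_nonneg fun p _ => by positivity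
  have hexpand : ∑ n ∈ Icc 1 N, (divisorCount P n - L) ^ 2 =
      ∑ n ∈ Icc 1 N, (divisorCount P n : ℝ) ^ 2 -
        2 * L * ∑ n ∈ Icc 1 N, (divisorCount P n : ℝ) + N * L ^ 2 := by
    simp only [sub_sq, sum_add_distrib, sum_sub_distrib, sum_const, Nat.card_Icc,
      Nat.add_sub_cancel, nsmul_eq_mul, mul_sum]
    simp only [mul_right_comm]
  rw [hexpand]
  nlinarith [mul_le_mul_of_nonneg_left hfirst hL0]

theorem sum_le_card_mul_of_sum_sq_le {ι : Type*} {s : Finset ι} {v : ι → ℝ} {C : ℝ} (hC : 0 ≤ C)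
    (h : ∑ i ∈ s, v i ^ 2 ≤ #s * C ^ 2) : ∑ i ∈ s, v i ≤ #s * C := by
  refine le_of_sq_le_sq ?_ (by positivity)
  calc (∑ i ∈ s, v i) ^ 2 ≤ #s * ∑ i ∈ s, v i ^ 2 := sq_sum_le_card_mul_sum_sq
    _ ≤ #s * (#s * C ^ 2) := by gcongr
    _ = (#s * C) ^ 2 := by ring

theorem sum_Icc_filter_dvd {M : Type*} [AddCommMonoid M] (h : ℕ → M) (N p : ℕ) :
    ∑ n ∈ Icc 1 N with p ∣ n, h n = ∑ m ∈ Icc 1 (N / p), h (p * m) := by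
  rcases p.eq_zero_or_pos with rfl | hp
  · refine (sum_eq_zero fun n hn => ?_).trans (by simp)
    simp only [mem_filter, mem_Icc, zero_dvd_iff] at hn
    omega
  have himage : {n ∈ Icc 1 N | p ∣ n} = (Icc 1 (N / p)).image (p * ·) := by
    ext n
    simp only [mem_filter, mem_Icc, mem_image, Nat.le_div_iff_mul_le hp]
    constructor
    · rintro ⟨⟨hn, hnN⟩, m, rfl⟩
      exact ⟨m, ⟨Nat.pos_of_mul_pos_left hn, by rwa [mul_comm]⟩, rfl⟩
    · rintro ⟨m, ⟨hm, hmN⟩, rfl⟩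
      exact ⟨⟨Nat.mul_pos hp hm, by rwa [mul_comm]⟩, dvd_mul_right p m⟩
  rw [himage, sum_image fun _ _ _ _ h => Nat.eq_of_mul_eq_mul_left hp h]

theorem sum_divisorCount_nsmul {M : Type*} [AddCommMonoid M] (P : Finset ℕ) (h : ℕ → M) (N : ℕ) :
    ∑ n ∈ Icc 1 N, divisorCount P n • h n = ∑ p ∈ P, ∑ m ∈ Icc 1 (N / p), h (p * m) := by
  simp only [divisorCount, ← sum_const, ← sum_Icc_filter_dvd, sum_filter]
  exact sum_comm

theorem sum_Icc_sum_filter_le_div {M : Type*} [AddCommMonoid M] (P : Finset ℕ) (h : ℕ → ℕ → M)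
    (N : ℕ) :
    ∑ m ∈ Icc 1 N, ∑ p ∈ P with m ≤ N / p, h p m = ∑ p ∈ P, ∑ m ∈ Icc 1 (N / p), h p m := by
  refine sum_comm' fun m p => ?_
  simp only [mem_filter, mem_Icc]
  have := Nat.div_le_self N p
  grind

theorem sum_inv_sq_le_two (P : Finset ℕ) : ∑ p ∈ P, ((p : ℝ) ^ 2)⁻¹ ≤ 2 := by
  have h := hasSum_zeta_two
  simp only [one_div] at h
  refine (sum_le_hasSum P (fun _ _ => by positivity) h).trans ?_
  nlinarith [Real.pi_lt_d2, Real.pi_pos]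

theorem exists_primes_le_sum_inv (C : ℝ) :
    ∃ P : Finset ℕ, (∀ p ∈ P, p.Prime) ∧ C ≤ ∑ p ∈ P, (p : ℝ)⁻¹ := by
  by_contra! hcon
  refine not_summable_one_div_on_primes (summable_of_sum_le (c := C)
    (Set.indicator_nonneg fun _ _ => by positivity) fun s => ?_)
  have h := hcon {p ∈ s | p.Prime} fun p hp => (mem_filter.1 hp).2
  simpa [sum_filter, Set.indicator_apply] using h.le

/-- The correlation over `1 ≤ m ≤ M` of the dilates `m ↦ a (p m)` and `m ↦ a (q m)`, which
Kátai's criterion requires to be small for distinct primes `p` and `q`. -/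
def dilateCorrelation (a : ℕ → ℂ) (p q M : ℕ) : ℂ :=
  ∑ m ∈ Icc 1 M, a (p * m) * starRingEnd ℂ (a (q * m))

/-- The coefficient of `u m` once `∑ n ≤ N, ω_P(n) a(n) u(n)` is expanded over the factorisations
`n = p m` with `p ∈ P` and `u (p m)` is replaced by `u p * u m`. -/
def dilateSum (P : Finset ℕ) (a u : ℕ → ℂ) (N m : ℕ) : ℂ :=
  ∑ p ∈ P with m ≤ N / p, u p * a (p * m)

variable {P : Finset ℕ} {a u : ℕ → ℂ}

theorem norm_dilateCorrelation_le (ha : ∀ n, ‖a n‖ ≤ 1) (p q M : ℕ) :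
    ‖dilateCorrelation a p q M‖ ≤ M := by
  refine (norm_sum_le_of_le (n := fun _ => (1 : ℝ)) _ fun m _ => ?_).trans (by simp)
  rw [norm_mul, RCLike.norm_conj]
  exact mul_le_one₀ (ha _) (norm_nonneg _) (ha _)

theorem sum_sq_norm_sum_le {ι κ : Type*} (s : Finset κ) (t : Finset ι) (v : ι → κ → ℂ) :
    ∑ m ∈ s, ‖∑ i ∈ t, v i m‖ ^ 2 ≤
      ∑ i ∈ t, ∑ j ∈ t, ‖∑ m ∈ s, v i m * starRingEnd ℂ (v j m)‖ := by
  have hexpand : ((∑ m ∈ s, ‖∑ i ∈ t, v i m‖ ^ 2 : ℝ) : ℂ) =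
      ∑ i ∈ t, ∑ j ∈ t, ∑ m ∈ s, v i m * starRingEnd ℂ (v j m) := by
    push_cast
    simp only [← Complex.mul_conj', map_sum, sum_mul_sum]
    rw [sum_comm]
    exact sum_congr rfl fun i _ => sum_comm
  calc ∑ m ∈ s, ‖∑ i ∈ t, v i m‖ ^ 2
      ≤ ‖((∑ m ∈ s, ‖∑ i ∈ t, v i m‖ ^ 2 : ℝ) : ℂ)‖ := by
        rw [Complex.norm_real]
        exact Real.le_norm_self _
    _ ≤ _ := by
        rw [hexpand]
        exact norm_sum_le_of_le _ fun i _ => norm_sum_le _ _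

theorem sum_sq_norm_dilateSum_le (hu : ∀ n, ‖u n‖ ≤ 1) (N : ℕ) :
    ∑ m ∈ Icc 1 N, ‖dilateSum P a u N m‖ ^ 2 ≤
      ∑ p ∈ P, ∑ q ∈ P, ‖dilateCorrelation a p q (min (N / p) (N / q))‖ := by
  simp only [dilateSum, sum_filter]
  refine (sum_sq_norm_sum_le _ _ _).trans (sum_le_sum fun p _ => sum_le_sum fun q _ => ?_)
  have hpair : ∑ m ∈ Icc 1 N, (if m ≤ N / p then u p * a (p * m) else 0) *
        starRingEnd ℂ (if m ≤ N / q then u q * a (q * m) else 0) =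
      u p * starRingEnd ℂ (u q) * dilateCorrelation a p q (min (N / p) (N / q)) := by
    have hIcc : Icc 1 (min (N / p) (N / q)) = {m ∈ Icc 1 N | m ≤ N / p ∧ m ≤ N / q} := by
      ext m
      simp only [mem_Icc, mem_filter, le_min_iff]
      have := Nat.div_le_self N p
      grind
    rw [dilateCorrelation, hIcc, mul_sum, sum_filter]
    refine sum_congr rfl fun m _ => ?_
    by_cases hp : m ≤ N / p <;> by_cases hq : m ≤ N / q <;> simp [hp, hq]
    ring
  rw [hpair, norm_mul, norm_mul, RCLike.norm_conj]
  exact mul_le_of_le_one_left (norm_nonneg _) (mul_le_one₀ (hu p) (norm_nonneg _) (hu q))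

theorem eventually_sum_sq_norm_dilateSum_le (hP : 0 ∉ P) (ha : ∀ n, ‖a n‖ ≤ 1)
    (hu : ∀ n, ‖u n‖ ≤ 1) {ε : ℝ} (hε : 0 ≤ ε)
    (hcorr : ∀ p ∈ P, ∀ q ∈ P, p ≠ q → ∀ᶠ M in atTop, ‖dilateCorrelation a p q M‖ ≤ ε * M) :
    ∀ᶠ N : ℕ in atTop, ∑ m ∈ Icc 1 N, ‖dilateSum P a u N m‖ ^ 2 ≤
      N * (∑ p ∈ P, (p : ℝ)⁻¹ + #P ^ 2 * ε) := by
  have hpair : ∀ p ∈ P, ∀ q ∈ P, ∀ᶠ N : ℕ in atTop,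
      ‖dilateCorrelation a p q (min (N / p) (N / q))‖ ≤
        (if p = q then N * (p : ℝ)⁻¹ else 0) + N * ε := by
    intro p hp q hq
    rcases eq_or_ne p q with rfl | hpq
    · filter_upwards with N
      rw [if_pos rfl, min_self, ← div_eq_mul_inv]
      have hdiag := (norm_dilateCorrelation_le ha p p (N / p)).trans Nat.cast_div_le
      exact hdiag.trans (le_add_of_nonneg_right (by positivity))
    · have hmin : Tendsto (fun N : ℕ => min (N / p) (N / q)) atTop atTop :=
        tendsto_inf_atTop atTop (Nat.tendsto_div_const_atTop (ne_of_mem_of_not_mem hp hP))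
          (Nat.tendsto_div_const_atTop (ne_of_mem_of_not_mem hq hP))
      filter_upwards [hmin.eventually (hcorr p hp q hq hpq)] with N hN
      rw [if_neg hpq, zero_add, mul_comm]
      refine hN.trans ?_
      gcongr
      exact (min_le_left _ _).trans (Nat.div_le_self N p)
  have hall := (eventually_all_finset P).2 fun p hp =>
    (eventually_all_finset P).2 fun q hq => hpair p hp q hq
  filter_upwards [hall] with N hN
  calc ∑ m ∈ Icc 1 N, ‖dilateSum P a u N m‖ ^ 2
      ≤ ∑ p ∈ P, ∑ q ∈ P, ((if p = q then N * (p : ℝ)⁻¹ else 0) + N * ε) :=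
        (sum_sq_norm_dilateSum_le hu N).trans
          (sum_le_sum fun p hp => sum_le_sum fun q hq => hN p hp q hq)
    _ = N * (∑ p ∈ P, (p : ℝ)⁻¹ + #P ^ 2 * ε) := by
        simp only [sum_add_distrib, sum_ite_eq, sum_const, nsmul_eq_mul, mul_add, mul_sum]
        congr 1
        · exact sum_congr rfl fun p hp => if_pos hp
        · ring

/- The two sides differ only at multiples of `p`. -/
theorem norm_sum_sub_dilate_le
    (hmul : ∀ p m : ℕ, p.Prime → p.Coprime m → u (p * m) = u p * u m)
    {p : ℕ} (hp : p.Prime) (ha : ∀ n, ‖a n‖ ≤ 1) (hu : ∀ n, ‖u n‖ ≤ 1) (N : ℕ) :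
    ‖∑ m ∈ Icc 1 (N / p), (a (p * m) * u (p * m) - u m * (u p * a (p * m)))‖ ≤
      2 * (N * ((p : ℝ) ^ 2)⁻¹) := by
  have hterm : ∀ m ∈ Icc 1 (N / p),
      ‖a (p * m) * u (p * m) - u m * (u p * a (p * m))‖ ≤ if p ∣ m then (2 : ℝ) else 0 := by
    intro m _
    split_ifs with hpm
    · refine (norm_sub_le _ _).trans ?_
      simp only [norm_mul]
      have h₁ := mul_le_one₀ (ha (p * m)) (norm_nonneg _) (hu (p * m))
      have h₂ := mul_le_one₀ (hu m) (by positivity)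
        (mul_le_one₀ (hu p) (norm_nonneg _) (ha (p * m)))
      linarith
    · rw [hmul p m hp (hp.coprime_iff_not_dvd.2 hpm)]
      exact (norm_eq_zero.2 (by ring)).le
  have hcard : #{m ∈ Icc 1 (N / p) | p ∣ m} = N / p ^ 2 := by
    rw [sq, ← Nat.div_div_eq_div_mul]
    exact Nat.Ioc_filter_dvd_card_eq_div (N / p) p
  refine (norm_sum_le_of_le _ hterm).trans ?_
  rw [← sum_filter, sum_const, hcard, nsmul_eq_mul, mul_comm, ← div_eq_mul_inv, ← Nat.cast_pow]
  gcongr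
  exact Nat.cast_div_le

theorem norm_sum_divisorCount_sub_sum_dilateSum_le
    (hmul : ∀ p m : ℕ, p.Prime → p.Coprime m → u (p * m) = u p * u m)
    (hP : ∀ p ∈ P, p.Prime) (ha : ∀ n, ‖a n‖ ≤ 1) (hu : ∀ n, ‖u n‖ ≤ 1) (N : ℕ) :
    ‖∑ n ∈ Icc 1 N, divisorCount P n • (a n * u n) -
      ∑ m ∈ Icc 1 N, u m * dilateSum P a u N m‖ ≤ 4 * N := by
  simp only [dilateSum, mul_sum]
  rw [sum_divisorCount_nsmul, sum_Icc_sum_filter_le_div, ← sum_sub_distrib]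
  simp only [← sum_sub_distrib]
  calc _ ≤ ∑ p ∈ P, 2 * (N * ((p : ℝ) ^ 2)⁻¹) :=
        norm_sum_le_of_le _ fun p hp => norm_sum_sub_dilate_le hmul (hP p hp) ha hu N
    _ = 2 * N * ∑ p ∈ P, ((p : ℝ) ^ 2)⁻¹ := by simp only [mul_sum, mul_assoc]
    _ ≤ 2 * N * 2 := by
        gcongr
        exact sum_inv_sq_le_two P
    _ = 4 * N := by ring

theorem mul_norm_sum_le
    (hmul : ∀ p m : ℕ, p.Prime → p.Coprime m → u (p * m) = u p * u m)
    (hP : ∀ p ∈ P, p.Prime) (ha : ∀ n, ‖a n‖ ≤ 1) (hu : ∀ n, ‖u n‖ ≤ 1)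
    {L : ℝ} (hL : 0 ≤ L) (N : ℕ) :
    L * ‖∑ n ∈ Icc 1 N, a n * u n‖ ≤
      4 * N + ∑ m ∈ Icc 1 N, ‖dilateSum P a u N m‖ + ∑ n ∈ Icc 1 N, |divisorCount P n - L| := by
  have hdecomp : (L : ℂ) * ∑ n ∈ Icc 1 N, a n * u n =
      (∑ n ∈ Icc 1 N, divisorCount P n • (a n * u n) -
        ∑ m ∈ Icc 1 N, u m * dilateSum P a u N m) +
      ∑ m ∈ Icc 1 N, u m * dilateSum P a u N m -
      ∑ n ∈ Icc 1 N, ((divisorCount P n - L : ℝ) : ℂ) * (a n * u n) := by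
    rw [sub_add_cancel, ← sum_sub_distrib, mul_sum]
    refine sum_congr rfl fun n _ => ?_
    push_cast
    rw [nsmul_eq_mul]
    ring
  have hdil : ‖∑ m ∈ Icc 1 N, u m * dilateSum P a u N m‖ ≤
      ∑ m ∈ Icc 1 N, ‖dilateSum P a u N m‖ := by
    refine norm_sum_le_of_le _ fun m _ => ?_
    rw [norm_mul]
    exact mul_le_of_le_one_left (norm_nonneg _) (hu m)
  have hdev : ‖∑ n ∈ Icc 1 N, ((divisorCount P n - L : ℝ) : ℂ) * (a n * u n)‖ ≤
      ∑ n ∈ Icc 1 N, |divisorCount P n - L| := by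
    refine norm_sum_le_of_le _ fun n _ => ?_
    rw [norm_mul, norm_mul, Complex.norm_real, Real.norm_eq_abs]
    exact mul_le_of_le_one_right (abs_nonneg _) (mul_le_one₀ (ha n) (norm_nonneg _) (hu n))
  calc L * ‖∑ n ∈ Icc 1 N, a n * u n‖ = ‖(L : ℂ) * ∑ n ∈ Icc 1 N, a n * u n‖ := by
        rw [norm_mul, Complex.norm_real, Real.norm_of_nonneg hL]
    _ ≤ _ := by
        rw [hdecomp]
        refine (norm_sub_le _ _).trans (add_le_add ((norm_add_le _ _).trans ?_) hdev)
        exact add_le_add (norm_sum_divisorCount_sub_sum_dilateSum_le hmul hP ha hu N) hdil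

theorem eventually_norm_sum_mul_le_div_sqrt
    (hmul : ∀ p m : ℕ, p.Prime → p.Coprime m → u (p * m) = u p * u m)
    (hP : ∀ p ∈ P, p.Prime) (ha : ∀ n, ‖a n‖ ≤ 1) (hu : ∀ n, ‖u n‖ ≤ 1) {L : ℝ}
    (hL : ∑ p ∈ P, (p : ℝ)⁻¹ = L) (hL1 : 1 ≤ L) {ε : ℝ} (hε : 0 ≤ ε)
    (hεL : #P ^ 2 * ε ≤ L)
    (hcorr : ∀ p ∈ P, ∀ q ∈ P, p ≠ q → ∀ᶠ M in atTop, ‖dilateCorrelation a p q M‖ ≤ ε * M) :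
    ∀ᶠ N : ℕ in atTop, ‖∑ n ∈ Icc 1 N, a n * u n‖ ≤ 8 / √L * N := by
  have hcoprime : (P : Set ℕ).Pairwise Nat.Coprime := fun p hp q hq =>
    (Nat.coprime_primes (hP p hp) (hP q hq)).2
  have hL0 : 0 < L := zero_lt_one.trans_le hL1
  have hs : 1 ≤ √L := Real.one_le_sqrt.2 hL1
  have hsq : √L ^ 2 = L := Real.sq_sqrt hL0.le
  filter_upwards [eventually_sum_sq_norm_dilateSum_le (fun h => (hP 0 h).ne_zero rfl) ha hu hε
    hcorr, eventually_ge_atTop #P] with N hN hPN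
  have hPN' : (#P : ℝ) ≤ N := Nat.cast_le.2 hPN
  have hdil : ∑ m ∈ Icc 1 N, ‖dilateSum P a u N m‖ ≤ N * (2 * √L) := by
    have h := sum_le_card_mul_of_sum_sq_le (s := Icc 1 N) (C := 2 * √L) (by positivity)
      (hN.trans ?_)
    · simpa using h
    rw [Nat.card_Icc, Nat.add_sub_cancel, mul_pow, hsq, hL]
    gcongr
    linarith
  have hdev : ∑ n ∈ Icc 1 N, |divisorCount P n - L| ≤ N * (2 * √L) := by
    have hTK := turan_kubilius hcoprime N
    rw [hL] at hTK
    simp only [← sq_abs (_ - L)] at hTK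
    have h := sum_le_card_mul_of_sum_sq_le (s := Icc 1 N) (C := 2 * √L) (by positivity)
      (hTK.trans ?_)
    · simpa using h
    rw [Nat.card_Icc, Nat.add_sub_cancel, mul_pow, hsq]
    nlinarith
  have hmain : √L ^ 2 * ‖∑ n ∈ Icc 1 N, a n * u n‖ ≤ √L * (8 * N) := by
    rw [hsq]
    have h4 : (4 : ℝ) * N ≤ 4 * √L * N := by nlinarith [Nat.cast_nonneg (α := ℝ) N]
    linarith [mul_norm_sum_le hmul hP ha hu hL0.le N]
  rw [div_mul_eq_mul_div, le_div_iff₀' (by positivity)]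
  rw [sq, mul_assoc] at hmain
  exact le_of_mul_le_mul_left hmain (by positivity)

/- The primes and the required quality of the correlations depend on `η` only, so the criterion
applies to a sequence `a` constructed after them. -/
theorem katai_criterion {η : ℝ} (hη : 0 < η) :
    ∃ P : Finset ℕ, (∀ p ∈ P, p.Prime) ∧ ∃ ε : ℝ, 0 < ε ∧ ∀ a u : ℕ → ℂ,
      (∀ p m : ℕ, p.Prime → p.Coprime m → u (p * m) = u p * u m) →
      (∀ n, ‖a n‖ ≤ 1) → (∀ n, ‖u n‖ ≤ 1) →
      (∀ p ∈ P, ∀ q ∈ P, p ≠ q → ∀ᶠ M in atTop, ‖dilateCorrelation a p q M‖ ≤ ε * M) →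
      ∀ᶠ N : ℕ in atTop, ‖∑ n ∈ Icc 1 N, a n * u n‖ ≤ η * N := by
  obtain ⟨P, hP, hL⟩ := exists_primes_le_sum_inv (max 1 ((8 / η) ^ 2))
  have hcard : (0 : ℝ) < #P ^ 2 + 1 := by positivity
  refine ⟨P, hP, (#P ^ 2 + 1 : ℝ)⁻¹, by positivity, fun a u hmul ha hu hcorr => ?_⟩
  have hL1 := (le_max_left _ _).trans hL
  have hbound : (#P : ℝ) ^ 2 * (#P ^ 2 + 1 : ℝ)⁻¹ ≤ 1 := by
    rw [← div_eq_mul_inv, div_le_one hcard]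
    linarith
  have hη' : 8 / √(∑ p ∈ P, (p : ℝ)⁻¹) ≤ η := by
    rw [div_le_comm₀ (Real.sqrt_pos.2 (zero_lt_one.trans_le hL1)) hη]
    exact Real.le_sqrt_of_sq_le ((le_max_right _ _).trans hL)
  filter_upwards [eventually_norm_sum_mul_le_div_sqrt hmul hP ha hu rfl hL1 (by positivity)
    (hbound.trans hL1) hcorr] with N hN
  exact hN.trans (by gcongr)

end KataiCriterion

section QuasiEigenfunctions

/-- A multiplicative form of the membership `F ∈ E_d(T)` for functions with values in an arbitrary
commutative group: dividing `d` times the pull-back under `T` by the function itself leads from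
`F` to the constant `c`, up to null sets. Measurability of `F` is a separate matter. -/
def IsQuasiEigenfunction {X G : Type*} [MeasurableSpace X] [CommGroup G] (T : X → X)
    (μ : Measure X) (c : G) : ℕ → (X → G) → Prop
  | 0, F => F =ᵐ[μ] fun _ => c
  | d + 1, F => IsQuasiEigenfunction T μ c d fun x => F (T x) / F x

namespace IsQuasiEigenfunction

variable {X Z G : Type*} [MeasurableSpace X] [MeasurableSpace Z] [CommGroup G] {T : X → X}
  {μ : Measure X} {R : Z → Z} {ρ : Measure Z} {c c' : G} {d : ℕ} {F F' : X → G}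

theorem congr_ae (hT : MeasurePreserving T μ μ) (hF : IsQuasiEigenfunction T μ c d F)
    (h : F =ᵐ[μ] F') : IsQuasiEigenfunction T μ c d F' := by
  induction d generalizing F F' with
  | zero => exact h.symm.trans hF
  | succ d ih => exact ih hF ((hT.quasiMeasurePreserving.ae_eq_comp h).div h)

theorem one : IsQuasiEigenfunction T μ (1 : G) d fun _ => 1 := by
  induction d with
  | zero => exact EventuallyEq.rfl
  | succ d ih => simpa only [IsQuasiEigenfunction, div_one] using ih

theorem mul (hF : IsQuasiEigenfunction T μ c d F) (hF' : IsQuasiEigenfunction T μ c' d F') :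
    IsQuasiEigenfunction T μ (c * c') d fun x => F x * F' x := by
  induction d generalizing F F' with
  | zero => exact EventuallyEq.mul hF hF'
  | succ d ih => simpa only [IsQuasiEigenfunction, div_mul_div_comm] using ih hF hF'

theorem inv (hF : IsQuasiEigenfunction T μ c d F) :
    IsQuasiEigenfunction T μ c⁻¹ d fun x => (F x)⁻¹ := by
  induction d generalizing F with
  | zero => exact EventuallyEq.inv hF
  | succ d ih => simpa only [IsQuasiEigenfunction, inv_div_inv, inv_div] using ih hF

theorem comp_factor {π : Z → X} (hπ : MeasurePreserving π ρ μ) (hcomm : Function.Semiconj π R T)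
    (hF : IsQuasiEigenfunction T μ c d F) :
    IsQuasiEigenfunction R ρ c d fun z => F (π z) := by
  induction d generalizing F with
  | zero => exact hπ.quasiMeasurePreserving.ae_eq_comp hF
  | succ d ih => simpa only [IsQuasiEigenfunction, hcomm.eq] using ih hF

theorem iterate_div (hT : MeasurePreserving T μ μ) (hF : IsQuasiEigenfunction T μ c (d + 1) F)
    (n : ℕ) : IsQuasiEigenfunction T μ (c ^ n) d fun x => F (T^[n] x) / F x := by
  induction n with
  | zero => simpa only [pow_zero, Function.iterate_zero_apply, div_self'] using one
  | succ n ih =>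
    have hstep := comp_factor (F := fun x => F (T x) / F x) (hT.iterate n)
      (Function.Commute.iterate_self T n) hF
    simpa only [pow_succ, Function.iterate_succ_apply', div_mul_div_cancel'] using ih.mul hstep

theorem iterate (hT : MeasurePreserving T μ μ) (hF : IsQuasiEigenfunction T μ c d F) (n : ℕ) :
    IsQuasiEigenfunction T^[n] μ (c ^ n ^ d) d F := by
  induction d generalizing c F with
  | zero => simpa only [pow_zero, pow_one, IsQuasiEigenfunction] using hF
  | succ d ih =>
    rw [pow_succ', pow_mul]
    exact ih (hF.iterate_div hT n)

end IsQuasiEigenfunction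

/- Bessel's inequality: the vectors `U^[n] x` are orthogonal, of the same norm, and have the same
inner product with `w`. -/
theorem inner_eq_zero_of_inner_iterate_eq_zero {𝕜 E : Type*} [RCLike 𝕜] [NormedAddCommGroup E]
    [InnerProductSpace 𝕜 E] (U : E →ₗᵢ[𝕜] E) {x w : E} (hw : U w = w)
    (hx : ∀ n, n ≠ 0 → inner 𝕜 x (U^[n] x) = 0) : inner 𝕜 x w = 0 := by
  rcases eq_or_ne x 0 with rfl | hx0
  · exact inner_zero_left w
  have hiter : ∀ n a b, inner 𝕜 (U^[n] a) (U^[n] b) = inner 𝕜 a b := by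
    intro n a b
    induction n with
    | zero => rfl
    | succ n ih => rw [Function.iterate_succ_apply', Function.iterate_succ_apply',
        U.inner_map_map, ih]
  have horth : ∀ n k, inner 𝕜 (U^[n] x) (U^[n + (k + 1)] x) = 0 := fun n k => by
    rw [Function.iterate_add_apply, hiter, hx _ k.succ_ne_zero]
  have hbasis : Orthonormal 𝕜 fun n : ℕ => ((‖x‖⁻¹ : ℝ) : 𝕜) • U^[n] x := by
    refine ⟨fun n => ?_, fun n m hnm => ?_⟩
    · have hnorm : ‖U^[n] x‖ = ‖x‖ := by
        rw [← sq_eq_sq₀ (norm_nonneg _) (norm_nonneg _), ← inner_self_eq_norm_sq (𝕜 := 𝕜), hiter,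
          inner_self_eq_norm_sq]
      rw [norm_smul, hnorm, RCLike.norm_ofReal, abs_inv, abs_norm,
        inv_mul_cancel₀ (norm_ne_zero_iff.2 hx0)]
    · have hzero : inner 𝕜 (U^[n] x) (U^[m] x) = 0 := by
        rcases lt_or_gt_of_ne hnm with h | h <;> obtain ⟨k, rfl⟩ := Nat.exists_eq_add_of_lt h
        · exact horth n k
        · exact inner_eq_zero_symm.1 (horth m k)
      simp only [inner_smul_left, inner_smul_right, hzero, mul_zero]
  have hconst : ∀ n, inner 𝕜 (((‖x‖⁻¹ : ℝ) : 𝕜) • U^[n] x) w = ((‖x‖⁻¹ : ℝ) : 𝕜) * inner 𝕜 x w := by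
    intro n
    rw [inner_smul_left, RCLike.conj_ofReal, ← Function.iterate_fixed hw n, hiter,
      Function.iterate_fixed hw n]
  have hlim := (hbasis.inner_products_summable w).tendsto_atTop_zero
  simp only [hconst] at hlim
  have := tendsto_nhds_unique tendsto_const_nhds hlim
  simpa [hx0] using this

section Integral

variable {X : Type*} [MeasurableSpace X] {T : X → X} {μ : Measure X} [IsFiniteMeasure μ]
  {F : X → Circle}

theorem memLp_coe_circle (hF : AEStronglyMeasurable F μ) (p : ENNReal) :
    MemLp (fun x => (F x : ℂ)) p μ :=
  .of_bound (continuous_subtype_val.comp_aestronglyMeasurable hF) 1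
    (Eventually.of_forall fun x => (Circle.norm_coe (F x)).le)

theorem integral_coe_circle_eq_zero (hT : MeasurePreserving T μ μ) (hF : AEStronglyMeasurable F μ)
    (h : ∀ n, n ≠ 0 → ∫ x, ((F (T^[n] x) / F x : Circle) : ℂ) ∂μ = 0) :
    ∫ x, (F x : ℂ) ∂μ = 0 := by
  have hF2 := memLp_coe_circle hF 2
  have hone : MemLp (fun _ : X => (1 : ℂ)) 2 μ := memLp_const 1
  let U := Lp.compMeasurePreservingₗᵢ ℂ (E := ℂ) (p := 2) T hT
  have hiter : ∀ n, ⇑(U^[n] (hF2.toLp _)) =ᵐ[μ] fun x => (F (T^[n] x) : ℂ) := by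
    intro n
    induction n with
    | zero => exact hF2.coeFn_toLp
    | succ n ih =>
      rw [Function.iterate_succ_apply']
      exact (Lp.coeFn_compMeasurePreserving _ hT).trans (hT.quasiMeasurePreserving.ae_eq_comp ih)
  have horth : ∀ n, n ≠ 0 → inner ℂ (hF2.toLp _) (U^[n] (hF2.toLp _)) = 0 := by
    intro n hn
    rw [L2.inner_def, ← h n hn]
    refine integral_congr_ae ?_
    filter_upwards [hF2.coeFn_toLp, hiter n] with x hx hxn
    rw [hx, hxn, RCLike.inner_apply, div_eq_mul_inv, Circle.coe_mul, Circle.coe_inv_eq_conj]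
  have hfixed : U (hone.toLp _) = hone.toLp _ := Lp.toLp_compMeasurePreserving hone hT
  have hinner := inner_eq_zero_of_inner_iterate_eq_zero U hfixed horth
  rw [L2.inner_def] at hinner
  refine (starRingEnd ℂ).injective ?_
  rw [← integral_conj, map_zero, ← hinner]
  refine integral_congr_ae ?_
  filter_upwards [hF2.coeFn_toLp, hone.coeFn_toLp] with x hx hx1
  rw [hx, hx1, RCLike.inner_apply, one_mul]

theorem IsQuasiEigenfunction.integral_eq_zero (hT : MeasurePreserving T μ μ)
    (hFm : AEStronglyMeasurable F μ) {c : Circle} (hc : ¬IsOfFinOrder c) {d : ℕ}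
    (hF : IsQuasiEigenfunction T μ c (d + 1) F) : ∫ x, (F x : ℂ) ∂μ = 0 := by
  induction d generalizing c F with
  | zero =>
    have hshift : ∫ x, (F (T x) : ℂ) ∂μ = ∫ x, (F x : ℂ) ∂μ := by
      have hmeas := (memLp_coe_circle hFm 1).1
      rw [← hT.map_eq] at hmeas
      rw [← integral_map hT.aemeasurable hmeas, hT.map_eq]
    have heigen : ∫ x, (F (T x) : ℂ) ∂μ = c * ∫ x, (F x : ℂ) ∂μ := by
      rw [← integral_const_mul]
      refine integral_congr_ae (hF.mono fun x hx => ?_)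
      exact Circle.coe_inj.2 (div_eq_iff_eq_mul.1 hx)
    have hc1 : (c : ℂ) ≠ 1 := fun h =>
      hc (by rw [Circle.coe_eq_one.1 h]; exact IsOfFinOrder.one)
    exact (mul_left_eq_self₀.1 (heigen.symm.trans hshift)).resolve_left hc1
  | succ d ih =>
    refine integral_coe_circle_eq_zero hT hFm fun n hn => ih ?_ ?_ (hF.iterate_div hT n)
    · exact (hFm.comp_measurePreserving (hT.iterate n)).div hFm
    · simpa [isOfFinOrder_pow, hn] using hc

end Integral

theorem not_isOfFinOrder_pow_mul_inv_pow {G : Type*} [Group G] {c : G} (hc : ¬IsOfFinOrder c)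
    {a b : ℕ} (hab : a ≠ b) : ¬IsOfFinOrder (c ^ a * (c ^ b)⁻¹) := by
  intro h
  obtain ⟨n, hn, h⟩ := isOfFinOrder_iff_zpow_eq_one.1 h
  refine hc (isOfFinOrder_iff_zpow_eq_one.2 ⟨(a - b) * n, ?_, ?_⟩)
  · exact mul_ne_zero (sub_ne_zero.2 (Nat.cast_injective.ne hab)) hn
  · rw [zpow_mul, zpow_sub, zpow_natCast, zpow_natCast, h]

section Reduction

variable {X : Type*} [MeasurableSpace X] {T : X → X} {μ : Measure X}

theorem exists_circle_of_mem_quasiEigenfunctions (hT : MeasurePreserving T μ μ) {k : ℕ}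
    {f : X → ℂ} (hf : f ∈ quasiEigenfunctions T μ k) :
    ∃ (c : Circle) (F : X → Circle), AEStronglyMeasurable F μ ∧ IsQuasiEigenfunction T μ c k F ∧
      f =ᵐ[μ] fun x => (F x : ℂ) := by
  induction k generalizing f with
  | zero =>
    obtain ⟨c, hc, -, rfl⟩ := hf
    let a : Circle := ⟨c, mem_sphere_zero_iff_norm.2 hc⟩
    exact ⟨a, fun _ => a, aestronglyMeasurable_const, EventuallyEq.rfl, EventuallyEq.rfl⟩
  | succ k ih =>
    obtain ⟨hfm, hf1, hfdiv⟩ := hf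
    obtain ⟨c, D, -, hD, hfD⟩ := ih hfdiv
    let F : X → Circle := fun x => Circle.exp (f x).arg
    have hfF : f =ᵐ[μ] fun x => (F x : ℂ) := by
      filter_upwards [hf1] with x hx
      simpa [F, hx] using (Complex.norm_mul_exp_arg_mul_I (f x)).symm
    have hFm : AEStronglyMeasurable F μ := Circle.exp.continuous.comp_aestronglyMeasurable
      (Complex.measurable_arg.comp hfm).aestronglyMeasurable
    refine ⟨c, F, hFm, IsQuasiEigenfunction.congr_ae (d := k) hT hD ?_, hfF⟩
    filter_upwards [hfD, hfF, hT.quasiMeasurePreserving.ae_eq_comp hfF] with x hxD hx hTx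
    simp only [Function.comp_apply] at hTx
    rw [← Circle.coe_inj, Circle.coe_div, ← hxD, hx, hTx]

theorem IsQuasiEigenfunction.ae_const_or_not_isOfFinOrder (hT : TotallyErgodic T μ)
    {F : X → Circle} (hFm : AEStronglyMeasurable F μ) {c : Circle} {k : ℕ}
    (hF : IsQuasiEigenfunction T μ c k F) :
    (∃ a : Circle, F =ᵐ[μ] fun _ => a) ∨
      ∃ (c' : Circle) (d : ℕ), ¬IsOfFinOrder c' ∧ IsQuasiEigenfunction T μ c' (d + 1) F := by
  have hTμ : MeasurePreserving T μ μ := (hT 1 one_ne_zero).toMeasurePreserving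
  induction k generalizing F with
  | zero => exact .inl ⟨c, hF⟩
  | succ k ih =>
    rcases ih ((hFm.comp_measurePreserving hTμ).div hFm) hF with ⟨a, ha⟩ | ⟨c', d, hc', hd⟩
    · have hFa : IsQuasiEigenfunction T μ a 1 F := ha
      by_cases hfin : IsOfFinOrder a
      · obtain ⟨m, hm, ham⟩ := isOfFinOrder_iff_pow_eq_one.1 hfin
        refine .inl ((hT m hm.ne').quasiErgodic.ae_eq_const_of_ae_eq_comp_ae hFm ?_)
        filter_upwards [hFa.iterate_div hTμ m] with x hx
        rwa [ham, div_eq_one] at hx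
      · exact .inr ⟨a, 0, hfin, hFa⟩
    · exact .inr ⟨c', d + 1, hc', hd⟩

end Reduction

end QuasiEigenfunctions

section UniqueErgodicity

namespace UniquelyErgodicWith

variable {Y Z : Type*} [MeasurableSpace Y] [MeasurableSpace Z] {S : Y → Y} {ν : Measure Y}

theorem measurePreserving_of_semiconj (hS : Measurable S) (huniq : UniquelyErgodicWith S ν)
    {R : Z → Z} {ρ : Measure Z} [IsProbabilityMeasure ρ] (hρ : MeasurePreserving R ρ ρ)
    {π : Z → Y} (hπ : Measurable π) (hcomm : Function.Semiconj π R S) :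
    MeasurePreserving π ρ ν := by
  refine ⟨hπ, huniq.2.2 _ (Measure.isProbabilityMeasure_map hπ.aemeasurable) ?_⟩
  rw [Measure.map_map hS hπ, ← hcomm.comp_eq, ← Measure.map_map hπ hρ.measurable, hρ.map_eq]

theorem iterate (hS : Measurable S) (huniq : UniquelyErgodicWith S ν) {p : ℕ} (hp : p ≠ 0)
    (herg : Ergodic S^[p] ν) : UniquelyErgodicWith S^[p] ν := by
  refine ⟨huniq.1, herg.map_eq, fun μ hμ hμp => ?_⟩
  have hν := huniq.1
  have hshift : ∑ i ∈ Finset.range p, μ.map S^[i + 1] = ∑ i ∈ Finset.range p, μ.map S^[i] := by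
    have hsum := Finset.sum_range_succ (fun i => μ.map S^[i]) p
    rw [Finset.sum_range_succ', hμp, Function.iterate_zero, Measure.map_id] at hsum
    ext s -
    have hsum_s := congrArg (fun m : Measure Y => m s) hsum
    simp only [Measure.add_apply] at hsum_s
    exact (ENNReal.add_left_inj (measure_ne_top μ s)).1 hsum_s
  have haverage : (p : ENNReal)⁻¹ • ∑ i ∈ Finset.range p, μ.map S^[i] = ν := by
    refine huniq.2.2 _ ⟨?_⟩ ?_
    · have hmass : ∀ i, μ.map S^[i] Set.univ = 1 := fun i =>
        (Measure.isProbabilityMeasure_map (hS.iterate i).aemeasurable).measure_univ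
      simp [hmass, ENNReal.inv_mul_cancel, hp]
    · rw [Measure.map_smul, ← Measure.mapₗ_apply_of_measurable hS, map_sum]
      simp only [Measure.mapₗ_apply_of_measurable hS, Measure.map_map hS (hS.iterate _),
        ← Function.iterate_succ', hshift]
  refine herg.eq_of_absolutelyContinuous ⟨hS.iterate p, hμp⟩ fun s hs => ?_
  rw [← haverage, Measure.smul_apply, smul_eq_mul, mul_eq_zero, Measure.finsetSum_apply,
    Finset.sum_eq_zero_iff] at hs
  simpa using hs.resolve_left (by simp) 0 (Finset.mem_range.2 hp.bot_lt)

end UniquelyErgodicWith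

section KrylovBogoliubov

variable {Z : Type*} [MeasurableSpace Z]

/-- The uniform distribution on the orbit segment `z, R z, …, R^[N] z`. It has `N + 1` points, so
that it is a probability measure for every `N`. -/
noncomputable def empiricalMeasure (R : Z → Z) (z : Z) (N : ℕ) : ProbabilityMeasure Z :=
  ⟨((N + 1 : ℕ) : ENNReal)⁻¹ • ∑ n ∈ Finset.range (N + 1), Measure.dirac (R^[n] z), ⟨by
    rw [Measure.smul_apply, Measure.finsetSum_apply]
    simpa using ENNReal.inv_mul_cancel (by simp) (by simp)⟩⟩

theorem integral_empiricalMeasure [MeasurableSingletonClass Z] {E : Type*} [NormedAddCommGroup E]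
    [NormedSpace ℝ E] [CompleteSpace E] (R : Z → Z) (z : Z) (N : ℕ) (φ : Z → E) :
    ∫ x, φ x ∂(empiricalMeasure R z N : Measure Z) = birkhoffAverage ℝ R φ (N + 1) z := by
  rw [empiricalMeasure, ProbabilityMeasure.coe_mk, integral_smul_measure,
    integral_finsetSum_measure fun n _ => integrable_dirac (by simp)]
  simp only [integral_dirac, birkhoffAverage, birkhoffSum, ENNReal.toReal_inv,
    ENNReal.toReal_natCast]

variable [TopologicalSpace Z] [BorelSpace Z] [T2Space Z] [HasOuterApproxClosed Z]
  {R : Z → Z} {z : Z}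

theorem measurePreserving_of_mapClusterPt_empiricalMeasure (hR : Continuous R)
    {ρ : ProbabilityMeasure Z} (hρ : MapClusterPt ρ atTop (empiricalMeasure R z)) :
    MeasurePreserving R (ρ : Measure Z) ρ := by
  obtain ⟨U, hU, hUρ⟩ := mapClusterPt_iff_ultrafilter.1 hρ
  have : IsProbabilityMeasure ((ρ : Measure Z).map R) :=
    Measure.isProbabilityMeasure_map hR.aemeasurable
  have hlim : ∀ ψ : BoundedContinuousFunction Z ℝ,
      Tendsto (fun N => birkhoffAverage ℝ R ψ (N + 1) z) U (nhds (∫ x, ψ x ∂(ρ : Measure Z))) := by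
    intro ψ
    simpa only [integral_empiricalMeasure] using
      ProbabilityMeasure.tendsto_iff_forall_integral_tendsto.1 hUρ ψ
  refine ⟨hR.measurable, ext_of_forall_integral_eq_of_IsFiniteMeasure fun ψ => ?_⟩
  rw [integral_map hR.aemeasurable ψ.continuous.aestronglyMeasurable, ← sub_eq_zero]
  have hdiff := ((tendsto_birkhoffAverage_apply_sub_birkhoffAverage' ℝ
    ψ.isBounded_range R z).comp (tendsto_add_atTop_nat 1)).mono_left hU
  refine tendsto_nhds_unique (((hlim (ψ.compContinuous ⟨R, hR⟩)).sub (hlim ψ)).congr fun N => ?_)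
    hdiff
  simp only [Function.comp_apply, birkhoffAverage, birkhoffSum, ← Function.iterate_succ_apply,
    Function.iterate_succ_apply']
  rfl

theorem eventually_norm_birkhoffAverage_lt [CompactSpace Z] {𝕜 : Type*} [RCLike 𝕜]
    (hR : Continuous R) (z : Z) {φ : Z → 𝕜} (hφ : Continuous φ) {ε : ℝ}
    (hε : ∀ ρ : ProbabilityMeasure Z, MeasurePreserving R (ρ : Measure Z) ρ →
      ‖∫ x, φ x ∂(ρ : Measure Z)‖ < ε) :
    ∀ᶠ N in atTop, ‖birkhoffAverage ℝ R φ (N + 1) z‖ < ε := by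
  let V : Set (ProbabilityMeasure Z) := {ρ | ‖∫ x, φ x ∂(ρ : Measure Z)‖ < ε}
  have hV : IsOpen V := by
    refine isOpen_lt (Continuous.norm (continuous_iff_continuousAt.2 fun ρ => ?_)) continuous_const
    exact (ProbabilityMeasure.tendsto_iff_forall_integral_rclike_tendsto 𝕜).1 tendsto_id
      (BoundedContinuousFunction.mkOfCompact ⟨φ, hφ⟩)
  have hmem : V ∈ map (empiricalMeasure R z) atTop :=
    isCompact_univ.adherence_nhdset (by simp) hV fun ρ _ hρ =>
      hε ρ (measurePreserving_of_mapClusterPt_empiricalMeasure hR hρ)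
  filter_upwards [hmem] with N hN
  simpa only [V, Set.mem_preimage, Set.mem_ofPred_eq, integral_empiricalMeasure] using hN

theorem eventually_norm_sum_orbit_le [CompactSpace Z] {𝕜 : Type*} [RCLike 𝕜] (hR : Continuous R)
    (z : Z) {φ : Z → 𝕜} (hφ : Continuous φ) {ε : ℝ}
    (hε : ∀ ρ : ProbabilityMeasure Z, MeasurePreserving R (ρ : Measure Z) ρ →
      ‖∫ x, φ x ∂(ρ : Measure Z)‖ < ε) :
    ∀ᶠ N : ℕ in atTop, ‖∑ n ∈ Finset.Icc 1 N, φ (R^[n] z)‖ ≤ ε * N := by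
  rw [← map_add_atTop_eq_nat 1, eventually_map]
  filter_upwards [eventually_norm_birkhoffAverage_lt hR (R z) hφ hε] with N hN
  have hsum : ∑ n ∈ Finset.Icc 1 (N + 1), φ (R^[n] z) = birkhoffSum R φ (N + 1) (R z) := by
    simp only [birkhoffSum, ← Function.iterate_succ_apply, Finset.range_eq_Ico,
      Finset.sum_Ico_add' (fun n => φ (R^[n] z)) 0 (N + 1) 1]
    rfl
  rw [birkhoffAverage, norm_smul, norm_inv, RCLike.norm_natCast,
    inv_mul_lt_iff₀ (by positivity)] at hN
  rw [hsum, mul_comm]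
  exact hN.le

end KrylovBogoliubov

end UniqueErgodicity
section Joinings

theorem norm_mul_conj_sub_mul_conj_le {a a' b b' : ℂ} (ha : ‖a‖ ≤ 1) (hb' : ‖b'‖ ≤ 1) :
    ‖a' * starRingEnd ℂ b' - a * starRingEnd ℂ b‖ ≤ ‖a - a'‖ + ‖b - b'‖ := by
  have hsplit : a' * starRingEnd ℂ b' - a * starRingEnd ℂ b =
      -((a - a') * starRingEnd ℂ b') - a * starRingEnd ℂ (b - b') := by
    rw [map_sub]
    ring
  rw [hsplit]
  refine (norm_sub_le _ _).trans ?_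
  rw [norm_neg, norm_mul, norm_mul, RCLike.norm_conj, RCLike.norm_conj]
  gcongr
  · exact mul_le_of_le_one_right (norm_nonneg _) hb'
  · exact mul_le_of_le_one_left (norm_nonneg _) ha

variable {Y Z : Type*} [MeasurableSpace Y] [MeasurableSpace Z] {S : Y → Y} {ν : Measure Y}
  {R : Z → Z} {ρ : Measure Z} [IsFiniteMeasure ρ] {π₁ π₂ : Z → Y}

theorem IsQuasiEigenfunction.integral_mul_conj_eq_zero (hS : MeasurePreserving S ν ν)
    (hR : MeasurePreserving R ρ ρ) (hπ₁ : MeasurePreserving π₁ ρ ν)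
    (hπ₂ : MeasurePreserving π₂ ρ ν) {p q : ℕ} (hpq : p ≠ q) (h₁ : Function.Semiconj π₁ R S^[p])
    (h₂ : Function.Semiconj π₂ R S^[q]) {F : Y → Circle} (hFm : AEStronglyMeasurable F ν)
    {c : Circle} (hc : ¬IsOfFinOrder c) {d : ℕ} (hF : IsQuasiEigenfunction S ν c (d + 1) F) :
    ∫ z, (F (π₁ z) : ℂ) * starRingEnd ℂ (F (π₂ z)) ∂ρ = 0 := by
  have hprod :=
    ((hF.iterate hS p).comp_factor hπ₁ h₁).mul ((hF.iterate hS q).comp_factor hπ₂ h₂).inv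
  have hconst := not_isOfFinOrder_pow_mul_inv_pow hc
    ((Nat.pow_left_injective d.succ_ne_zero).ne hpq)
  have hmeas := (hFm.comp_measurePreserving hπ₁).mul (hFm.comp_measurePreserving hπ₂).inv
  simpa only [Pi.mul_apply, Pi.inv_apply, Function.comp_apply, Circle.coe_mul,
    Circle.coe_inv_eq_conj] using
    IsQuasiEigenfunction.integral_eq_zero hR hmeas hconst hprod

theorem norm_integral_mul_conj_sub_le [IsFiniteMeasure ν] (hπ₁ : MeasurePreserving π₁ ρ ν)
    (hπ₂ : MeasurePreserving π₂ ρ ν) {g h : Y → ℂ} (hg : AEStronglyMeasurable g ν)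
    (hh : AEStronglyMeasurable h ν) (hg1 : ∀ y, ‖g y‖ ≤ 1) (hh1 : ∀ y, ‖h y‖ ≤ 1) :
    ‖∫ z, h (π₁ z) * starRingEnd ℂ (h (π₂ z)) ∂ρ - ∫ z, g (π₁ z) * starRingEnd ℂ (g (π₂ z)) ∂ρ‖ ≤
      2 * ∫ y, ‖g y - h y‖ ∂ν := by
  have hintegrable : ∀ f : Y → ℂ, AEStronglyMeasurable f ν → (∀ y, ‖f y‖ ≤ 1) →
      Integrable (fun z => f (π₁ z) * starRingEnd ℂ (f (π₂ z))) ρ := by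
    refine fun f hf hf1 => .of_bound ((hf.comp_measurePreserving hπ₁).mul
      (Complex.continuous_conj.comp_aestronglyMeasurable (hf.comp_measurePreserving hπ₂))) 1
      (.of_forall fun z => ?_)
    rw [norm_mul, RCLike.norm_conj]
    exact mul_le_one₀ (hf1 _) (norm_nonneg _) (hf1 _)
  have hdiff : Integrable (fun y => ‖g y - h y‖) ν :=
    ((Integrable.of_bound hg 1 (.of_forall hg1)).sub (.of_bound hh 1 (.of_forall hh1))).norm
  have hmarginal : ∀ π : Z → Y, MeasurePreserving π ρ ν →
      ∫ z, ‖g (π z) - h (π z)‖ ∂ρ = ∫ y, ‖g y - h y‖ ∂ν := fun π hπ => by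
    rw [← hπ.map_eq, integral_map hπ.aemeasurable]
    rw [hπ.map_eq]
    exact hdiff.1
  have h₁ := hπ₁.integrable_comp_of_integrable hdiff
  have h₂ := hπ₂.integrable_comp_of_integrable hdiff
  rw [← integral_sub (hintegrable h hh hh1) (hintegrable g hg hg1)]
  calc _ ≤ ∫ z, (‖g (π₁ z) - h (π₁ z)‖ + ‖g (π₂ z) - h (π₂ z)‖) ∂ρ :=
        norm_integral_le_of_norm_le (h₁.add h₂)
          (.of_forall fun z => norm_mul_conj_sub_mul_conj_le (hg1 _) (hh1 _))
    _ = 2 * ∫ y, ‖g y - h y‖ ∂ν := by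
        rw [two_mul]
        nth_rw 1 [← hmarginal π₁ hπ₁]
        rw [← hmarginal π₂ hπ₂]
        exact integral_add h₁ h₂

end Joinings

theorem IsQuasiEigenfunction.eventually_norm_dilateCorrelation_le {Y : Type*} [MetricSpace Y]
    [CompactSpace Y] [MeasurableSpace Y] [BorelSpace Y] {S : Y → Y} (hS : Continuous S)
    {ν : Measure Y}
    (huniq : UniquelyErgodicWith S ν) (herg : TotallyErgodic S ν) {F : Y → Circle}
    (hFm : AEStronglyMeasurable F ν) {c : Circle} (hc : ¬IsOfFinOrder c) {d : ℕ}
    (hF : IsQuasiEigenfunction S ν c (d + 1) F) {h : C(Y, ℂ)} (hh : ∀ x, ‖h x‖ ≤ 1) {ε : ℝ}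
    (hε : 2 * ∫ x, ‖(F x : ℂ) - h x‖ ∂ν < ε) (y : Y) {p q : ℕ} (hp : p ≠ 0) (hq : q ≠ 0)
    (hpq : p ≠ q) :
    ∀ᶠ N : ℕ in atTop, ‖dilateCorrelation (fun n => h (S^[n] y)) p q N‖ ≤ ε * N := by
  have hν := huniq.1
  have horbit : ∀ n, (Prod.map S^[p] S^[q])^[n] (y, y) = (S^[p * n] y, S^[q * n] y) := fun n => by
    rw [Prod.map_iterate, Prod.map_apply, ← Function.iterate_mul, ← Function.iterate_mul]
  have hφ : Continuous fun x : Y × Y => h x.1 * starRingEnd ℂ (h x.2) := by fun_prop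
  suffices hjoining : ∀ ρ : ProbabilityMeasure (Y × Y),
      MeasurePreserving (Prod.map S^[p] S^[q]) (ρ : Measure (Y × Y)) ρ →
      ‖∫ x, h x.1 * starRingEnd ℂ (h x.2) ∂(ρ : Measure (Y × Y))‖ < ε by
    simpa only [dilateCorrelation, horbit] using
      eventually_norm_sum_orbit_le ((hS.iterate p).prodMap (hS.iterate q)) (y, y) hφ hjoining
  intro ρ hρ
  have hfst : MeasurePreserving Prod.fst (ρ : Measure (Y × Y)) ν :=
    (huniq.iterate hS.measurable hp (herg p hp)).measurePreserving_of_semiconj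
      (hS.measurable.iterate p) hρ measurable_fst fun _ => rfl
  have hsnd : MeasurePreserving Prod.snd (ρ : Measure (Y × Y)) ν :=
    (huniq.iterate hS.measurable hq (herg q hq)).measurePreserving_of_semiconj
      (hS.measurable.iterate q) hρ measurable_snd fun _ => rfl
  have hzero := hF.integral_mul_conj_eq_zero ⟨hS.measurable, huniq.2.1⟩ hρ hfst hsnd hpq
    (fun _ => rfl) (fun _ => rfl) hFm hc
  have hclose := norm_integral_mul_conj_sub_le hfst hsnd (memLp_coe_circle hFm 1).1
    h.continuous.aestronglyMeasurable (fun x => (Circle.norm_coe (F x)).le) hh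
  rw [hzero, sub_zero] at hclose
  exact hclose.trans_lt hε

section Approximation

theorem integral_norm_le_norm_Lp {X E : Type*} [MeasurableSpace X] {μ : Measure X}
    [IsProbabilityMeasure μ] [NormedAddCommGroup E] {p : ENNReal} (hp : 1 ≤ p) (g : Lp E p μ) :
    ∫ x, ‖g x‖ ∂μ ≤ ‖g‖ := by
  have hg := Lp.memLp g
  rw [Lp.norm_def, integral_norm_eq_lintegral_enorm hg.1, ← eLpNorm_one_eq_lintegral_enorm]
  exact ENNReal.toReal_mono hg.2.ne (eLpNorm_le_eLpNorm_of_exponent_le hp hg.1)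

/-- The radial retraction of a normed space onto its closed unit ball. -/
noncomputable def unitBallRetraction {E : Type*} [NormedAddCommGroup E] [NormedSpace ℝ E] (w : E) :
    E :=
  (max 1 ‖w‖)⁻¹ • w

namespace unitBallRetraction

variable {E : Type*} [NormedAddCommGroup E] [NormedSpace ℝ E]

theorem continuous : Continuous (unitBallRetraction : E → E) :=
  ((continuous_const.max continuous_norm).inv₀ fun _ => by positivity).smul continuous_id

theorem norm_le_one (w : E) : ‖unitBallRetraction w‖ ≤ 1 := by
  rw [unitBallRetraction, norm_smul, norm_inv, Real.norm_of_nonneg (by positivity),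
    inv_mul_le_one₀ (by positivity)]
  exact le_max_right _ _

theorem norm_sub_le {v : E} (hv : ‖v‖ ≤ 1) (w : E) : ‖v - unitBallRetraction w‖ ≤ 2 * ‖v - w‖ := by
  have hmove : ‖w - unitBallRetraction w‖ ≤ ‖v - w‖ := by
    rcases le_total ‖w‖ 1 with hw | hw
    · simp [unitBallRetraction, max_eq_left hw]
    · have hw0 : ‖w‖ ≠ 0 := (one_pos.trans_le hw).ne'
      have hsub : w - unitBallRetraction w = (1 - ‖w‖⁻¹) • w := by
        rw [unitBallRetraction, max_eq_right hw, sub_smul, one_smul]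
      rw [hsub, norm_smul, Real.norm_of_nonneg (sub_nonneg.2 (inv_le_one_of_one_le₀ hw)), sub_mul,
        inv_mul_cancel₀ hw0, one_mul, norm_sub_rev v]
      exact (sub_le_sub_left hv _).trans (norm_sub_norm_le w v)
  calc _ ≤ ‖v - w‖ + ‖w - unitBallRetraction w‖ := norm_sub_le_norm_sub_add_norm_sub _ _ _
    _ ≤ 2 * ‖v - w‖ := by linarith

end unitBallRetraction

theorem exists_continuousMap_norm_le_one_norm_sub_toLp_lt {Y E : Type*} [TopologicalSpace Y]
    [NormalSpace Y] [CompactSpace Y] [MeasurableSpace Y] [BorelSpace Y] {ν : Measure Y}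
    [IsFiniteMeasure ν] [ν.WeaklyRegular] [NormedAddCommGroup E] [NormedSpace ℝ E]
    [SecondCountableTopologyEither Y E] {p : ENNReal} [Fact (1 ≤ p)] (hp : p ≠ ⊤) {g : Lp E p ν}
    (hg : ∀ᵐ x ∂ν, ‖g x‖ ≤ 1) {δ : ℝ} (hδ : 0 < δ) :
    ∃ h : C(Y, E), (∀ x, ‖h x‖ ≤ 1) ∧ ‖g - ContinuousMap.toLp p ν ℝ h‖ < δ := by
  obtain ⟨h, hh⟩ := (ContinuousMap.toLp_denseRange E ν ℝ hp).exists_dist_lt g (half_pos hδ)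
  rw [dist_eq_norm] at hh
  let h₁ : C(Y, E) := ⟨fun x => unitBallRetraction (h x),
    unitBallRetraction.continuous.comp h.continuous⟩
  refine ⟨h₁, fun x => unitBallRetraction.norm_le_one _, ?_⟩
  suffices hle : ‖g - ContinuousMap.toLp p ν ℝ h₁‖ ≤ 2 * ‖g - ContinuousMap.toLp p ν ℝ h‖ by
    linarith
  refine Lp.norm_le_mul_norm_of_ae_le_mul ?_
  filter_upwards [hg, Lp.coeFn_sub g (ContinuousMap.toLp p ν ℝ h₁),
    Lp.coeFn_sub g (ContinuousMap.toLp p ν ℝ h), ContinuousMap.coeFn_toLp (p := p) (𝕜 := ℝ) ν h₁,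
    ContinuousMap.coeFn_toLp (p := p) (𝕜 := ℝ) ν h] with x hgx hsub₁ hsub hx₁ hx
  rw [hsub₁, hsub, Pi.sub_apply, Pi.sub_apply, hx₁, hx]
  exact unitBallRetraction.norm_sub_le hgx _

end Approximation

section ApproxOrthogonal

open scoped ENNReal

variable {Y : Type*} [MetricSpace Y] [CompactSpace Y] [MeasurableSpace Y] [BorelSpace Y]
  {S : Y → Y} {u : ℕ → ℂ} {y : Y} {p : ℝ≥0∞} [Fact (1 ≤ p)] {ν : Measure Y}

section Submodule

variable [IsFiniteMeasure ν]

/-- The classes in `L^p(ν)` which can be approximated by continuous functions whose averages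
against `u` along the `S`-orbit of `y` are eventually as small as the error of approximation. -/
def approxOrthogonal (S : Y → Y) (u : ℕ → ℂ) (y : Y) (p : ℝ≥0∞) [Fact (1 ≤ p)] (ν : Measure Y)
    [IsFiniteMeasure ν] : Submodule ℂ (Lp ℂ p ν) where
  carrier := {g | ∀ ε > 0, ∃ h : C(Y, ℂ), ‖g - ContinuousMap.toLp p ν ℂ h‖ < ε ∧
    ∀ᶠ N : ℕ in atTop, ‖∑ n ∈ Finset.Icc 1 N, h (S^[n] y) * u n‖ ≤ ε * N}
  zero_mem' ε hε := ⟨0, by simpa using hε, .of_forall fun N => by simpa using by positivity⟩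
  add_mem' {g₁ g₂} hg₁ hg₂ ε hε := by
    obtain ⟨h₁, hclose₁, havg₁⟩ := hg₁ (ε / 2) (half_pos hε)
    obtain ⟨h₂, hclose₂, havg₂⟩ := hg₂ (ε / 2) (half_pos hε)
    refine ⟨h₁ + h₂, ?_, ?_⟩
    · rw [map_add, add_sub_add_comm]
      exact (norm_add_le _ _).trans_lt (by linarith)
    · filter_upwards [havg₁, havg₂] with N hN₁ hN₂
      simp only [ContinuousMap.add_apply, add_mul, Finset.sum_add_distrib]
      exact (norm_add_le _ _).trans (by linarith)
  smul_mem' c g hg ε hε := by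
    have hc : ‖c‖ * (ε / (‖c‖ + 1)) < ε := by
      rw [mul_div_assoc', div_lt_iff₀ (by positivity)]
      linarith
    obtain ⟨h, hclose, havg⟩ := hg (ε / (‖c‖ + 1)) (by positivity)
    refine ⟨c • h, ?_, ?_⟩
    · rw [map_smul, ← smul_sub, norm_smul]
      exact (by gcongr : _ ≤ ‖c‖ * (ε / (‖c‖ + 1))).trans_lt hc
    · filter_upwards [havg] with N hN
      simp only [ContinuousMap.smul_apply, smul_eq_mul, mul_assoc, ← Finset.mul_sum, norm_mul]
      calc _ ≤ ‖c‖ * (ε / (‖c‖ + 1)) * N := by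
            rw [mul_assoc]
            gcongr
        _ ≤ ε * N := by gcongr

theorem isClosed_approxOrthogonal : IsClosed (approxOrthogonal S u y p ν : Set (Lp ℂ p ν)) := by
  refine isClosed_of_closure_subset fun g hg ε hε => ?_
  obtain ⟨g', hg', hgg'⟩ := Metric.mem_closure_iff.1 hg (ε / 2) (half_pos hε)
  obtain ⟨h, hclose, havg⟩ := hg' (ε / 2) (half_pos hε)
  refine ⟨h, ?_, havg.mono fun N hN => hN.trans (by gcongr; exact half_le_self hε.le)⟩
  rw [dist_eq_norm] at hgg'
  exact (norm_sub_le_norm_sub_add_norm_sub g g' _).trans_lt (by linarith)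

theorem mem_approxOrthogonal_of_ae_const
    (hu : Tendsto (fun N : ℕ => (N : ℂ)⁻¹ * ∑ n ∈ Finset.Icc 1 N, u n) atTop (nhds 0)) {c : ℂ}
    {g : Lp ℂ p ν} (hg : g =ᵐ[ν] fun _ => c) : g ∈ approxOrthogonal S u y p ν := by
  have hmean : Tendsto (fun N : ℕ => (N : ℂ)⁻¹ * ∑ n ∈ Finset.Icc 1 N, c * u n) atTop (nhds 0) := by
    simpa only [← Finset.mul_sum, mul_left_comm, mul_zero] using hu.const_mul c
  intro ε hε
  refine ⟨.const Y c, ?_, tendsto_inv_mul_sum_Icc_zero_iff.1 hmean ε hε⟩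
  have hconst : g = ContinuousMap.toLp p ν ℂ (.const Y c) :=
    Lp.ext (hg.trans (ContinuousMap.coeFn_toLp (p := p) (𝕜 := ℂ) ν (.const Y c)).symm)
  rwa [hconst, sub_self, norm_zero]

end Submodule

theorem integral_norm_sub_le_norm_sub_toLp [IsProbabilityMeasure ν] {g : Lp ℂ p ν} {F : Y → ℂ}
    (hF : g =ᵐ[ν] F) (h : C(Y, ℂ)) :
    ∫ x, ‖F x - h x‖ ∂ν ≤ ‖g - ContinuousMap.toLp p ν ℂ h‖ := by
  refine (integral_congr_ae ?_).trans_le (integral_norm_le_norm_Lp Fact.out _)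
  filter_upwards [hF, Lp.coeFn_sub g (ContinuousMap.toLp p ν ℂ h),
    ContinuousMap.coeFn_toLp (p := p) (𝕜 := ℂ) ν h] with x hx hsub hhx
  rw [hsub, Pi.sub_apply, hhx, hx]

theorem IsQuasiEigenfunction.mem_approxOrthogonal [IsProbabilityMeasure ν] (hp : p ≠ ∞)
    (hS : Continuous S) (huniq : UniquelyErgodicWith S ν) (herg : TotallyErgodic S ν)
    (hmul : ∀ l m : ℕ, l.Prime → l.Coprime m → u (l * m) = u l * u m) (hu : ∀ n, ‖u n‖ ≤ 1)
    {F : Y → Circle} (hFm : AEStronglyMeasurable F ν) {c : Circle} (hc : ¬IsOfFinOrder c) {d : ℕ}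
    (hF : IsQuasiEigenfunction S ν c (d + 1) F) {g : Lp ℂ p ν} (hg : g =ᵐ[ν] fun x => (F x : ℂ)) :
    g ∈ approxOrthogonal S u y p ν := by
  intro η hη
  obtain ⟨P, hP, ε, hε, hkatai⟩ := katai_criterion hη
  have hg1 : ∀ᵐ x ∂ν, ‖g x‖ ≤ 1 := hg.mono fun x hx => by rw [hx, Circle.norm_coe]
  obtain ⟨h, hh1, hgh⟩ := exists_continuousMap_norm_le_one_norm_sub_toLp_lt hp hg1
    (lt_min hη (half_pos hε))
  have hclose : 2 * ∫ x, ‖(F x : ℂ) - h x‖ ∂ν < ε := by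
    have := (integral_norm_sub_le_norm_sub_toLp hg h).trans_lt (hgh.trans_le (min_le_right _ _))
    linarith
  refine ⟨h, hgh.trans_le (min_le_left _ _), hkatai (fun n => h (S^[n] y)) u hmul
    (fun n => hh1 _) hu fun l hl q hq hlq => ?_⟩
  exact hF.eventually_norm_dilateCorrelation_le hS huniq herg hFm hc hh1 hclose y
    (hP l hl).ne_zero (hP q hq).ne_zero hlq

theorem tendsto_of_mem_approxOrthogonal [IsProbabilityMeasure ν] (hS : Continuous S)
    (huniq : UniquelyErgodicWith S ν) (hu : ∀ n, ‖u n‖ ≤ 1) {g : Lp ℂ p ν}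
    (hg : g ∈ approxOrthogonal S u y p ν) {f : Y → ℂ} (hf : Continuous f) (hgf : g =ᵐ[ν] f) :
    Tendsto (fun N : ℕ => (N : ℂ)⁻¹ * ∑ n ∈ Finset.Icc 1 N, f (S^[n] y) * u n) atTop (nhds 0) := by
  refine tendsto_inv_mul_sum_Icc_zero_iff.2 fun ε hε => ?_
  obtain ⟨h, hclose, havg⟩ := hg (ε / 2) (half_pos hε)
  have hφ : Continuous fun x => ‖f x - h x‖ := (hf.sub h.continuous).norm
  have hdist : ∀ᶠ N : ℕ in atTop,
      ‖∑ n ∈ Finset.Icc 1 N, ‖f (S^[n] y) - h (S^[n] y)‖‖ ≤ ε / 2 * N := by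
    refine eventually_norm_sum_orbit_le hS y hφ fun ρ hρ => ?_
    rw [huniq.2.2 ρ inferInstance hρ.map_eq,
      Real.norm_of_nonneg (integral_nonneg fun _ => norm_nonneg _)]
    exact (integral_norm_sub_le_norm_sub_toLp hgf h).trans_lt hclose
  filter_upwards [havg, hdist] with N hN hNdist
  rw [Real.norm_of_nonneg (Finset.sum_nonneg fun _ _ => norm_nonneg _)] at hNdist
  calc ‖∑ n ∈ Finset.Icc 1 N, f (S^[n] y) * u n‖
      = ‖∑ n ∈ Finset.Icc 1 N, (f (S^[n] y) - h (S^[n] y)) * u n +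
          ∑ n ∈ Finset.Icc 1 N, h (S^[n] y) * u n‖ := by
        simp only [sub_mul, Finset.sum_sub_distrib, sub_add_cancel]
    _ ≤ ∑ n ∈ Finset.Icc 1 N, ‖f (S^[n] y) - h (S^[n] y)‖ +
          ‖∑ n ∈ Finset.Icc 1 N, h (S^[n] y) * u n‖ := by
        refine (norm_add_le _ _).trans (add_le_add_left (norm_sum_le_of_le _ fun n _ => ?_) _)
        rw [norm_mul]
        exact mul_le_of_le_one_right (norm_nonneg _) (hu n)
    _ ≤ ε * N := by linarith

end ApproxOrthogonal

theorem sarnak_quasiDiscreteSpectrum_of_mean_zero_general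
    {Y : Type*} [MetricSpace Y] [CompactSpace Y] [MeasurableSpace Y] [BorelSpace Y]
    {S : Y → Y} (hS : Continuous S) {ν : Measure Y} (huniq : UniquelyErgodicWith S ν)
    (herg : TotallyErgodic S ν) {u : ℕ → ℂ}
    (hmul : ∀ l m : ℕ, l.Prime → l.Coprime m → u (l * m) = u l * u m) (hu : ∀ n, ‖u n‖ ≤ 1)
    (hmean : Tendsto (fun N : ℕ => (N : ℂ)⁻¹ * ∑ n ∈ Finset.Icc 1 N, u n) atTop (nhds 0))
    {p : ENNReal} [Fact (1 ≤ p)] (hp : p ≠ ⊤) {g : Lp ℂ p ν}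
    (hg : g ∈ closure (Submodule.span ℂ
      {g : Lp ℂ p ν | ∃ k : ℕ, ∃ f ∈ quasiEigenfunctions S ν k, ⇑g =ᵐ[ν] f} : Set (Lp ℂ p ν)))
    {f : Y → ℂ} (hf : Continuous f) (hgf : g =ᵐ[ν] f) (y : Y) :
    Tendsto (fun N : ℕ => (N : ℂ)⁻¹ * ∑ n ∈ Finset.Icc 1 N, f (S^[n] y) * u n)
      atTop (nhds 0) := by
  have hν := huniq.1
  suffices hspan : Submodule.span ℂ
      {g : Lp ℂ p ν | ∃ k : ℕ, ∃ f ∈ quasiEigenfunctions S ν k, ⇑g =ᵐ[ν] f} ≤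
        approxOrthogonal S u y p ν from
    tendsto_of_mem_approxOrthogonal hS huniq hu
      (closure_minimal hspan isClosed_approxOrthogonal hg) hf hgf
  rw [Submodule.span_le]
  rintro e ⟨k, e', he', hee'⟩
  obtain ⟨c, F, hFm, hF, heF⟩ :=
    exists_circle_of_mem_quasiEigenfunctions ⟨hS.measurable, huniq.2.1⟩ he'
  rcases hF.ae_const_or_not_isOfFinOrder herg hFm with ⟨a, hFa⟩ | ⟨c', d, hc', hF'⟩
  · refine mem_approxOrthogonal_of_ae_const (c := a) hmean ((hee'.trans heF).trans ?_)
    exact hFa.mono fun x hx => congrArg Subtype.val hx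
  · exact hF'.mem_approxOrthogonal hp hS huniq herg hmul hu hFm hc' (hee'.trans heF)

/-- If `S` is a uniquely ergodic continuous map of a compact metric space `Y` whose unique
invariant measure `ν` makes `(Y,ν,S)` a system with quasi-discrete spectrum, and if `u` is a
multiplicative function, `|u| ≤ 1`, whose averages tend to `0`, then for every continuous `f`
(no assumption on `∫ f dν`) and every `y ∈ Y`, `(1/N) ∑_{n ≤ N} f(Sⁿ y) u(n) → 0`. -/
theorem sarnak_quasiDiscreteSpectrum_of_mean_zero
    {Y : Type*} [MetricSpace Y] [CompactSpace Y] [MeasurableSpace Y] [BorelSpace Y]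
    (S : Y → Y) (hScont : Continuous S) (ν : Measure Y)
    (huniq : UniquelyErgodicWith S ν)
    (hqds : QuasiDiscreteSpectrum S ν)
    (u : ℕ → ℂ) (hu_mult : ∀ m n : ℕ, Nat.Coprime m n → u (m * n) = u m * u n)
    (hu_bd : ∀ n, ‖u n‖ ≤ 1)
    (hu_mean : Tendsto (fun N : ℕ => (N : ℂ)⁻¹ * ∑ n ∈ Finset.Icc 1 N, u n) atTop (nhds 0))
    (f : Y → ℂ) (hf : Continuous f) (y : Y) :
    Tendsto (fun N : ℕ => (N : ℂ)⁻¹ * ∑ n ∈ Finset.Icc 1 N, f (S^[n] y) * u n)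
      atTop (nhds 0) := by
  have hν := huniq.1
  exact sarnak_quasiDiscreteSpectrum_of_mean_zero_general hScont huniq hqds.1
    (fun l m _ => hu_mult l m) hu_bd hu_mean ENNReal.ofNat_ne_top
    (hqds.2 (ContinuousMap.toLp 2 ν ℂ ⟨f, hf⟩)) hf (ContinuousMap.coeFn_toLp ν ⟨f, hf⟩) y
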